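/- Suppose 0 ≤ K and h(0) < −rK, and let δ†, α, x̂ and K₀⋆ be defined as follows: δ† is the unique solution of ∫_δ^∞ s^{−n−1}[h(s) + rK] ds = 0; α > δ† is the unique solution of m∫_{δ†}^α s^{−m−1}[h(s) − rK₁] ds + r(K₁ + K)δ†^{−m} = 0; x̂ is the unique zero in (δ†, α) of the derivative of g(x) = (x^m/(σ²(n−m)))∫ₓ^α s^{−m−1}[h(s) − rK₁] ds − (xⁿ/(σ²(n−m)))∫ₓ^α s^{−n−1}[h(s) − rK₁] ds; and K₀⋆ = −K₁ − (m x̂^m/r)∫_{x̂}^α s^{−m−1}[h(s) − rK₁] ds. Then K₀ = K₀⋆ if and only if the pair (β, α) = (x̂, α) satisfies the two equations m∫_β^α s^{−m−1}h(s) ds + rK₀β^{−m} + rK₁α^{−m} = 0 and n∫_β^α s^{−n−1}h(s) ds + rK₀β^{−n} + rK₁α^{−n} = 0. -/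

import Mathlib

open MeasureTheory Set Filter Topology

set_option linter.unusedVariables false

/-- `h(0) := lim_{x↓0} h(x) ∈ [-∞, ∞)`; for a right-continuous increasing `h` this is the
infimum of `h` over `(0, ∞)`, viewed in the extended reals. -/
noncomputable def hZero (h : ℝ → ℝ) : EReal := ⨅ x ∈ Set.Ioi (0 : ℝ), (h x : EReal)

/-- The particular solution `R_h` to the ODE `σ²x²w'' + bxw' - rw + h = 0`. -/
noncomputable def Rh (σ m n : ℝ) (h : ℝ → ℝ) (x : ℝ) : ℝ :=
  (1 / (σ ^ 2 * (n - m))) *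
    (x ^ m * (∫ s in Set.Ioc (0 : ℝ) x, s ^ (-m - 1) * h s)
      + x ^ n * ∫ s in Set.Ioi x, s ^ (-n - 1) * h s)

/-- The function `g(x) = (x^m/(σ²(n-m))) ∫_x^α s^{-m-1}[h(s)-rK₁] ds
  - (x^n/(σ²(n-m))) ∫_x^α s^{-n-1}[h(s)-rK₁] ds`. -/
noncomputable def gFun (r σ m n K₁ α : ℝ) (h : ℝ → ℝ) (x : ℝ) : ℝ :=
  (x ^ m / (σ ^ 2 * (n - m))) * (∫ s in x..α, s ^ (-m - 1) * (h s - r * K₁))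
    - (x ^ n / (σ ^ 2 * (n - m))) * ∫ s in x..α, s ^ (-n - 1) * (h s - r * K₁)

/-- `K₀⋆ = -K₁ - (m x̂^m / r) ∫_{x̂}^α s^{-m-1}[h(s) - rK₁] ds`. -/
noncomputable def KZeroStar (r m K₁ : ℝ) (h : ℝ → ℝ) (xh α : ℝ) : ℝ :=
  -K₁ - (m * xh ^ m / r) * ∫ s in xh..α, s ^ (-m - 1) * (h s - r * K₁)

/-- `s ^ p * (h s - c)` is interval integrable on compact intervals of `(0, ∞)`. -/
theorem aux_int {h : ℝ → ℝ} (hMono : MonotoneOn h (Set.Ioi 0)) (p c : ℝ) {x y : ℝ}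
    (hx : 0 < x) (hy : 0 < y) :
    IntervalIntegrable (fun s : ℝ => s ^ p * (h s - c)) volume x y := by
  have hsub : uIcc x y ⊆ Ioi 0 := fun s hs => lt_of_lt_of_le (lt_min hx hy) hs.1
  have h1 : IntervalIntegrable h volume x y := (hMono.mono hsub).intervalIntegrable
  have h2 : IntervalIntegrable (fun s => h s - c) volume x y :=
    h1.sub intervalIntegrable_const
  refine h2.continuousOn_mul ?_
  intro s hs
  exact (Real.continuousAt_rpow_const s p (Or.inl (hsub hs).ne')).continuousWithinAt

theorem aux_deriv {h : ℝ → ℝ} (hMono : MonotoneOn h (Set.Ioi 0)) (p c L : ℝ) {x y : ℝ}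
    (hx : 0 < x) (hy : 0 < y) (s t : Set ℝ)
    [intervalIntegral.FTCFilter x (𝓝[s] x) (𝓝[t] x)]
    (hL : Tendsto h (𝓝[t] x ⊓ ae volume) (𝓝 L)) :
    HasDerivWithinAt (fun u => ∫ v in u..y, v ^ p * (h v - c)) (-(x ^ p * (L - c))) s x := by
  apply intervalIntegral.integral_hasDerivWithinAt_of_tendsto_ae_left (aux_int hMono p c hx hy)
    (t := t)
  · refine ⟨Ioc (x / 2) (x + 1), mem_nhdsWithin_of_mem_nhds
      (Ioc_mem_nhds (by linarith) (by linarith)), ?_⟩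
    exact (aux_int hMono p c (x := x / 2) (y := x + 1) (by linarith) (by linarith)).1.1
  · refine Tendsto.mul ?_ (hL.sub_const c)
    exact (Real.continuousAt_rpow_const x p (Or.inl hx.ne')).tendsto.mono_left
      (inf_le_left.trans nhdsWithin_le_nhds)

theorem aux_g_within {h : ℝ → ℝ} (hMono : MonotoneOn h (Set.Ioi 0)) (r σ m n K₁ α L : ℝ)
    {x : ℝ} (hx : 0 < x) (hα : 0 < α) (s t : Set ℝ)
    [intervalIntegral.FTCFilter x (𝓝[s] x) (𝓝[t] x)]
    (hL : Tendsto h (𝓝[t] x ⊓ ae volume) (𝓝 L)) :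
    HasDerivWithinAt (gFun r σ m n K₁ α h)
      ((m * x ^ (m - 1) / (σ ^ 2 * (n - m))) * (∫ s in x..α, s ^ (-m - 1) * (h s - r * K₁))
      - (n * x ^ (n - 1) / (σ ^ 2 * (n - m))) * ∫ s in x..α, s ^ (-n - 1) * (h s - r * K₁))
      s x := by
  have hA := aux_deriv hMono (-m - 1) (r * K₁) L hx hα s t hL
  have hB := aux_deriv hMono (-n - 1) (r * K₁) L hx hα s t hL
  have pm : HasDerivWithinAt (fun u : ℝ => u ^ m / (σ ^ 2 * (n - m)))
      (m * x ^ (m - 1) / (σ ^ 2 * (n - m))) s x :=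
    ((Real.hasDerivAt_rpow_const (Or.inl hx.ne')).div_const _).hasDerivWithinAt
  have pn : HasDerivWithinAt (fun u : ℝ => u ^ n / (σ ^ 2 * (n - m)))
      (n * x ^ (n - 1) / (σ ^ 2 * (n - m))) s x :=
    ((Real.hasDerivAt_rpow_const (Or.inl hx.ne')).div_const _).hasDerivWithinAt
  have e1 : x ^ m * x ^ (-m - 1) = x ^ (-1 : ℝ) := by
    rw [← Real.rpow_add hx]; congr 1; ring
  have e2 : x ^ n * x ^ (-n - 1) = x ^ (-1 : ℝ) := by
    rw [← Real.rpow_add hx]; congr 1; ring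
  have key := (pm.mul hA).sub (pn.mul hB)
  refine HasDerivWithinAt.congr_deriv key ?_
  linear_combination (-(L - r * K₁) / (σ ^ 2 * (n - m))) * (e1 - e2)

theorem aux_g {h : ℝ → ℝ} (hMono : MonotoneOn h (Set.Ioi 0))
    (hRC : ∀ x : ℝ, 0 < x → ContinuousWithinAt h (Set.Ici x) x) (r σ m n K₁ α : ℝ)
    {x : ℝ} (hx : 0 < x) (hα : 0 < α) :
    HasDerivAt (gFun r σ m n K₁ α h)
      ((m * x ^ (m - 1) / (σ ^ 2 * (n - m))) * (∫ s in x..α, s ^ (-m - 1) * (h s - r * K₁))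
      - (n * x ^ (n - 1) / (σ ^ 2 * (n - m))) * ∫ s in x..α, s ^ (-n - 1) * (h s - r * K₁))
      x := by
  have hR := aux_g_within hMono r σ m n K₁ α (h x) hx hα (Ici x) (Ioi x)
    (((hRC x hx).mono Ioi_subset_Ici_self).tendsto.mono_left inf_le_left)
  have hlim := MonotoneOn.tendsto_nhdsWithin_Ioo_left (f := h) (x := x) (y := 0)
    (nonempty_Ioo.2 hx) (hMono.mono fun s hs => hs.1)
    ⟨h x, by rintro _ ⟨s, hs, rfl⟩; exact hMono hs.1 hx hs.2.le⟩
  have hle : 𝓝[Iic x] x ⊓ ae (volume : Measure ℝ) ≤ 𝓝[Iio x] x := by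
    intro S hS
    have h1 : S ∪ {x} ∈ 𝓝[Iic x] x := by
      rw [← Iio_insert, nhdsWithin_insert]
      refine mem_sup.2 ⟨?_, mem_of_superset hS subset_union_left⟩
      exact mem_pure.2 (Or.inr rfl)
    have h2 : ({x}ᶜ : Set ℝ) ∈ ae (volume : Measure ℝ) := by
      rw [mem_ae_iff]; simp
    filter_upwards [mem_inf_of_left h1, mem_inf_of_right h2] with y hy1 hy2
    exact hy1.resolve_right hy2
  have hLft := aux_g_within hMono r σ m n K₁ α _ hx hα (Iic x) (Iic x) (hlim.mono_left hle)
  have := hLft.union hR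
  rwa [Iic_union_Ici, hasDerivWithinAt_univ] at this

theorem aux_split {h : ℝ → ℝ} (hMono : MonotoneOn h (Set.Ioi 0)) (m c : ℝ) (hm : m ≠ 0) {x y : ℝ}
    (hx : 0 < x) (hy : 0 < y) :
    m * (∫ s in x..y, s ^ (-m - 1) * h s) =
      m * (∫ s in x..y, s ^ (-m - 1) * (h s - c)) + c * (x ^ (-m) - y ^ (-m)) := by
  have hsub : (0 : ℝ) ∉ uIcc x y := fun hs => absurd hs.1 (not_le.2 (lt_min hx hy))
  have h1 := aux_int hMono (-m - 1) c hx hy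
  have h2 : IntervalIntegrable (fun s : ℝ => c * s ^ (-m - 1)) volume x y :=
    (intervalIntegral.intervalIntegrable_rpow (Or.inr hsub)).const_mul c
  have h3 : (∫ s in x..y, s ^ (-m - 1) * h s) =
      (∫ s in x..y, s ^ (-m - 1) * (h s - c)) + ∫ s in x..y, c * s ^ (-m - 1) := by
    rw [← intervalIntegral.integral_add h1 h2]
    congr 1; ext s; ring
  rw [h3, intervalIntegral.integral_const_mul,
    integral_rpow (Or.inr ⟨fun e => hm (by linarith), hsub⟩), show -m - 1 + 1 = -m by ring]
  field_simp
  ring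

theorem statement_19
    (r b σ m n : ℝ) (h : ℝ → ℝ)
    (hr : 0 < r) (hσ : σ ≠ 0) (hm : m < 0) (hn : 0 < n)
    (hmRoot : σ ^ 2 * m ^ 2 + (b - σ ^ 2) * m - r = 0)
    (hnRoot : σ ^ 2 * n ^ 2 + (b - σ ^ 2) * n - r = 0)
    (hMono : MonotoneOn h (Set.Ioi 0))
    (hRC : ∀ x : ℝ, 0 < x → ContinuousWithinAt h (Set.Ici x) x)
    (hTop : Tendsto h atTop atTop)
    (hIntZero : ∀ x : ℝ, 0 < x →
      IntegrableOn (fun s : ℝ => s ^ (-m - 1) * h s) (Set.Ioc 0 x))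
    (hIntTop : ∀ x : ℝ, 0 < x →
      IntegrableOn (fun s : ℝ => s ^ (-n - 1) * h s) (Set.Ioi x))
    (K₁ K₀ K : ℝ) (hK₁ : 0 < K₁) (hK₀ : 0 < K₀)
    (hK : 0 ≤ K) (hcond : hZero h < ((-(r * K) : ℝ) : EReal))
    (δdag : ℝ) (hδdag : 0 < δdag)
    (hδdagEq : (∫ s in Set.Ioi δdag, s ^ (-n - 1) * (h s + r * K)) = 0)
    (α : ℝ) (hα : δdag < α)
    (hαEq : m * (∫ s in δdag..α, s ^ (-m - 1) * (h s - r * K₁))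
      + r * (K₁ + K) * δdag ^ (-m) = 0)
    (xh : ℝ) (hxh : xh ∈ Set.Ioo δdag α)
    (hxhEq : deriv (gFun r σ m n K₁ α h) xh = 0)
    (hxhUniq : ∀ xh' : ℝ, xh' ∈ Set.Ioo δdag α →
      deriv (gFun r σ m n K₁ α h) xh' = 0 → xh' = xh) :
    K₀ = KZeroStar r m K₁ h xh α ↔
      (m * (∫ s in xh..α, s ^ (-m - 1) * h s)
          + r * K₀ * xh ^ (-m) + r * K₁ * α ^ (-m) = 0 ∧
       n * (∫ s in xh..α, s ^ (-n - 1) * h s)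
          + r * K₀ * xh ^ (-n) + r * K₁ * α ^ (-n) = 0) := by
  have hx : 0 < xh := hδdag.trans hxh.1
  have hα0 : 0 < α := hδdag.trans hα
  have hd := (aux_g hMono hRC r σ m n K₁ α hx hα0).deriv
  rw [hxhEq] at hd
  rw [aux_split hMono m (r * K₁) hm.ne hx hα0, aux_split hMono n (r * K₁) hn.ne' hx hα0]
  unfold KZeroStar
  generalize (∫ s in xh..α, s ^ (-m - 1) * (h s - r * K₁)) = A at *
  generalize (∫ s in xh..α, s ^ (-n - 1) * (h s - r * K₁)) = B at *
  have hnm : n - m ≠ 0 := by linarith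
  have hpm := Real.rpow_pos_of_pos hx m
  have hpn := Real.rpow_pos_of_pos hx n
  rw [Real.rpow_sub_one hx.ne', Real.rpow_sub_one hx.ne'] at hd
  have hg : m * xh ^ m * A = n * xh ^ n * B := by
    field_simp at hd
    linarith
  rw [Real.rpow_neg hx.le, Real.rpow_neg hx.le]
  generalize xh ^ m = P at *
  generalize xh ^ n = Q at *
  have h1 : (m * A + r * K₁ * (P⁻¹ - α ^ (-m)) + r * K₀ * P⁻¹ + r * K₁ * α ^ (-m) = 0) ↔
      m * P * A + r * (K₀ + K₁) = 0 := by
    have : m * A + r * K₁ * (P⁻¹ - α ^ (-m)) + r * K₀ * P⁻¹ + r * K₁ * α ^ (-m)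
        = P⁻¹ * (m * P * A + r * (K₀ + K₁)) := by field_simp; ring
    rw [this]; simp [hpm.ne']
  have h2 : (n * B + r * K₁ * (Q⁻¹ - α ^ (-n)) + r * K₀ * Q⁻¹ + r * K₁ * α ^ (-n) = 0) ↔
      m * P * A + r * (K₀ + K₁) = 0 := by
    have : n * B + r * K₁ * (Q⁻¹ - α ^ (-n)) + r * K₀ * Q⁻¹ + r * K₁ * α ^ (-n)
        = Q⁻¹ * (m * P * A + r * (K₀ + K₁)) := by rw [hg]; field_simp; ring
    rw [this]; simp [hpn.ne']
  rw [h1, h2, and_self]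
  have h3 : m * P / r * A = (m * P * A) / r := by ring
  rw [h3, eq_sub_iff_add_eq, ← eq_sub_iff_add_eq', div_eq_iff hr.ne']
  constructor <;> intro H <;> linarith
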